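/- In the limit setting of inradius collapse, the restriction η0|_{C0²}: C0² → X_2 is a double covering map, and X_2 is open in X. -/

import Mathlib

open Metric Filter Topology Set
open scoped ENNReal NNReal Classical

noncomputable section

/-! ## Comparison geometry vocabulary -/

/-- Cosine of the comparison angle at the vertex opposite to the side of length `ab`,
for a triangle with side lengths `a`, `b`, `ab` in the simply connected model surface of
constant curvature `c` (law of cosines in the Euclidean, spherical and hyperbolic cases). -/
noncomputable def modelCosAngle (c a b ab : ℝ) : ℝ :=
  if c = 0 then (a ^ 2 + b ^ 2 - ab ^ 2) / (2 * a * b)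
  else if 0 < c then
    (Real.cos (Real.sqrt c * ab) - Real.cos (Real.sqrt c * a) * Real.cos (Real.sqrt c * b)) /
      (Real.sin (Real.sqrt c * a) * Real.sin (Real.sqrt c * b))
  else
    (Real.cosh (Real.sqrt (-c) * a) * Real.cosh (Real.sqrt (-c) * b) -
        Real.cosh (Real.sqrt (-c) * ab)) /
      (Real.sinh (Real.sqrt (-c) * a) * Real.sinh (Real.sqrt (-c) * b))

/-- The comparison angle `∠̃_c` for side lengths `a`, `b`, `ab` in the model surface of
curvature `c`. -/
noncomputable def comparisonAngle (c a b ab : ℝ) : ℝ :=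
  Real.arccos (modelCosAngle c a b ab)

/-- A geodesic metric space: every two points are joined by a minimal (unit speed) geodesic. -/
def IsGeodesicSpace (X : Type*) [MetricSpace X] : Prop :=
  ∀ x y : X, ∃ γ : ℝ → X, γ 0 = x ∧ γ (dist x y) = y ∧
    ∀ s ∈ Set.Icc (0 : ℝ) (dist x y), ∀ t ∈ Set.Icc (0 : ℝ) (dist x y),
      dist (γ s) (γ t) = |s - t|

/-- A length space (approximate-midpoints characterisation). -/
def IsLengthSpace (X : Type*) [MetricSpace X] : Prop :=
  ∀ x y : X, ∀ ε > (0 : ℝ), ∃ m : X,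
    dist x m ≤ dist x y / 2 + ε ∧ dist m y ≤ dist x y / 2 + ε

/-- An Alexandrov space with curvature bounded below by `c`: a geodesic space satisfying
the (1+3)-point comparison (the sum of comparison angles around a point is at most `2π`). -/
def IsAlexandrovCurvGE (X : Type*) [MetricSpace X] (c : ℝ) : Prop :=
  IsGeodesicSpace X ∧
  ∀ p x y z : X, p ≠ x → p ≠ y → p ≠ z →
    comparisonAngle c (dist p x) (dist p y) (dist x y) +
      comparisonAngle c (dist p y) (dist p z) (dist y z) +
      comparisonAngle c (dist p z) (dist p x) (dist z x) ≤ 2 * Real.pi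

/-- An `m`-dimensional Alexandrov space (with lower curvature bound `c`) is *almost regular*
if every point carries an `(m,δ)`-strainer for some `δ < 1/(100 m)`. -/
def IsAlmostRegular (X : Type*) [MetricSpace X] (c : ℝ) (m : ℕ) : Prop :=
  ∃ δ : ℝ, 0 < δ ∧ δ < 1 / (100 * m) ∧ ∀ x : X, ∃ a b : Fin m → X,
    (∀ i, Real.pi - δ < comparisonAngle c (dist x (a i)) (dist x (b i)) (dist (a i) (b i))) ∧
    (∀ i j, i ≠ j →
      Real.pi / 2 - δ < comparisonAngle c (dist x (a i)) (dist x (a j)) (dist (a i) (a j)) ∧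
      Real.pi / 2 - δ < comparisonAngle c (dist x (b i)) (dist x (b j)) (dist (b i) (b j)) ∧
      Real.pi / 2 - δ < comparisonAngle c (dist x (a i)) (dist x (b j)) (dist (a i) (b j)))

/-! ## Abstract manifolds with boundary -/

/-- An abstract compact Riemannian manifold with boundary: a compact metric space with a
distinguished boundary, together with predicates recording the (Riemannian) sectional
curvature lower bound and the two-sided bound on the second fundamental form of the
boundary, and the Riemannian volume. -/
structure CompactManifoldBdry : Type 1 where
  M : Type
  [metric : MetricSpace M]
  [compact : CompactSpace M]
  [nonemp : Nonempty M]
  boundary : Set M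
  boundary_closed : IsClosed boundary
  boundary_nonempty : boundary.Nonempty
  dimension : ℕ
  /-- `secCurvGE κ` records the Riemannian condition `K_M ≥ κ`. -/
  secCurvGE : ℝ → Prop
  /-- `absSecondFFLE λ` records the Riemannian condition `|II_∂M| ≤ λ`. -/
  absSecondFFLE : ℝ → Prop
  /-- the Riemannian volume of `M` -/
  volume : ℝ

attribute [instance] CompactManifoldBdry.metric CompactManifoldBdry.compact
  CompactManifoldBdry.nonemp

/-- Membership in the class `𝓜(n,κ,λ,d)`. -/
def CompactManifoldBdry.memClass (X : CompactManifoldBdry) (n : ℕ) (κ lam d : ℝ) : Prop :=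
  X.dimension = n ∧ X.secCurvGE κ ∧ X.absSecondFFLE lam ∧
    Metric.diam (Set.univ : Set X.M) ≤ d

/-- The inradius `inrad(M) = sup_{x ∈ M} d(x, ∂M)`. -/
noncomputable def CompactManifoldBdry.inradius (X : CompactManifoldBdry) : ℝ :=
  ⨆ x : X.M, Metric.infDist x X.boundary

/-- An abstract complete (not necessarily compact) Riemannian manifold with boundary,
as in the class `𝓜(n,κ,λ)`. -/
structure CompleteManifoldBdry : Type 1 where
  M : Type
  [metric : MetricSpace M]
  [complete : CompleteSpace M]
  [nonemp : Nonempty M]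
  boundary : Set M
  boundary_closed : IsClosed boundary
  boundary_nonempty : boundary.Nonempty
  dimension : ℕ
  /-- `secCurvGE κ` records the Riemannian condition `K_M ≥ κ`. -/
  secCurvGE : ℝ → Prop
  /-- `absSecondFFLE λ` records the Riemannian condition `|II_∂M| ≤ λ`. -/
  absSecondFFLE : ℝ → Prop
  /-- `isDiffeomorphicToProdInterval W` records that `M` is diffeomorphic to `W × [0,1]`. -/
  isDiffeomorphicToProdInterval : Set M → Prop

attribute [instance] CompleteManifoldBdry.metric CompleteManifoldBdry.complete
  CompleteManifoldBdry.nonemp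

/-- The inradius of a complete manifold with boundary. -/
noncomputable def CompleteManifoldBdry.inradius (X : CompleteManifoldBdry) : ℝ :=
  ⨆ x : X.M, Metric.infDist x X.boundary

/-! ## Gromov–Hausdorff convergence and inradius collapse -/

/-- Gromov–Hausdorff convergence of the sequence `Msec` to the compact metric space `N`. -/
def ghConvergesTo (Msec : ℕ → CompactManifoldBdry) (N : Type*)
    [MetricSpace N] [CompactSpace N] [Nonempty N] : Prop :=
  Tendsto (fun i => GromovHausdorff.ghDist (Msec i).M N) atTop (𝓝 0)

/-- `Msec` inradius collapses to `N`: GH-convergence together with `inrad(M_i) → 0`. -/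
def inradiusCollapsesTo (Msec : ℕ → CompactManifoldBdry) (N : Type*)
    [MetricSpace N] [CompactSpace N] [Nonempty N] : Prop :=
  ghConvergesTo Msec N ∧ Tendsto (fun i => (Msec i).inradius) atTop (𝓝 0)

/-! ## Intrinsic (induced length) metrics -/

/-- The intrinsic (induced length) distance on a subset `A` of a metric space: the infimum
of the lengths of continuous curves in `A` joining the two points. -/
noncomputable def intrinsicDist {X : Type*} [MetricSpace X] (A : Set X) (x y : X) : ℝ≥0∞ :=
  ⨅ (γ : ℝ → X) (_ : ContinuousOn γ (Set.Icc 0 1)) (_ : Set.MapsTo γ (Set.Icc 0 1) A)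
    (_ : γ 0 = x) (_ : γ 1 = y), eVariationOn γ (Set.Icc 0 1)

/-- `A` with its intrinsic length metric (`A^int`) is isometric to the metric space `N`. -/
def intrinsicIsometricTo {X : Type*} [MetricSpace X] (A : Set X) (N : Type*)
    [MetricSpace N] : Prop :=
  ∃ F : A → N, Function.Bijective F ∧
    ∀ p q : A, intrinsicDist A (p : X) (q : X) = ENNReal.ofReal (dist (F p) (F q))

/-- A minimal geodesic of `X^int` (constant speed, parametrised on `[0,1]`) joining `x`
to `y` inside the subset `X`. -/
def IsIntrinsicMinGeodesic {Y : Type*} [MetricSpace Y] (X : Set Y) (x y : Y)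
    (γ : ℝ → Y) : Prop :=
  γ 0 = x ∧ γ 1 = y ∧ Set.MapsTo γ (Set.Icc 0 1) X ∧
  ∀ s ∈ Set.Icc (0 : ℝ) 1, ∀ t ∈ Set.Icc (0 : ℝ) 1,
    intrinsicDist X (γ s) (γ t) = ENNReal.ofReal |s - t| * intrinsicDist X x y

/-! ## Geodesics, angles, spaces of directions -/

/-- A unit speed geodesic emanating from `x` (defined on some nondegenerate interval `[0,T]`). -/
def IsUnitSpeedGeodesicFrom {Y : Type*} [MetricSpace Y] (x : Y) (γ : ℝ → Y) : Prop :=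
  γ 0 = x ∧ ∃ T > (0 : ℝ), ∀ s ∈ Set.Icc (0 : ℝ) T, ∀ t ∈ Set.Icc (0 : ℝ) T,
    dist (γ s) (γ t) = |s - t|

/-- A unit speed minimal geodesic from `x` to `y`. -/
def IsMinGeodesicFromTo {Y : Type*} [MetricSpace Y] (x y : Y) (γ : ℝ → Y) : Prop :=
  γ 0 = x ∧ γ (dist x y) = y ∧
    ∀ s ∈ Set.Icc (0 : ℝ) (dist x y), ∀ t ∈ Set.Icc (0 : ℝ) (dist x y),
      dist (γ s) (γ t) = |s - t|

/-- The (upper) angle at `x` between two curves emanating from `x`, as the limit of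
Euclidean comparison angles. -/
noncomputable def upperAngleAt {Y : Type*} [MetricSpace Y] (x : Y) (α β : ℝ → Y) : ℝ :=
  Filter.limsup
    (fun st : ℝ × ℝ =>
      comparisonAngle 0 (dist x (α st.1)) (dist x (β st.2)) (dist (α st.1) (β st.2)))
    ((𝓝[>] (0 : ℝ)) ×ˢ (𝓝[>] (0 : ℝ)))

/-- Data exhibiting the metric space `S` as *the* space of directions `Σ_x(Y)`: the
completion of the set of unit speed geodesic directions at `x` equipped with the angle
metric. -/
structure DirectionSpaceData (Y : Type*) [MetricSpace Y] (x : Y) (S : Type*)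
    [MetricSpace S] where
  F : {γ : ℝ → Y // IsUnitSpeedGeodesicFrom x γ} → S
  dense : DenseRange F
  angle : ∀ α β, dist (F α) (F β) = upperAngleAt x α.1 β.1

/-- The space of directions `Σ_x(X)` of a subset `X ⊆ Y` at `x`, viewed inside a space of
directions of `Y` (presented by `F`): limits of directions of minimal geodesics from `x`
to points of `X` converging to `x`. -/
def directionsToSubset (Y : Type*) [MetricSpace Y] (x : Y) {S : Type*} [MetricSpace S]
    (F : {γ : ℝ → Y // IsUnitSpeedGeodesicFrom x γ} → S) (X : Set Y) : Set S :=
  {ξ | ∃ (y : ℕ → Y) (γ : ℕ → {γ : ℝ → Y // IsUnitSpeedGeodesicFrom x γ}),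
        (∀ i, y i ∈ X ∧ y i ≠ x ∧ IsMinGeodesicFromTo x (y i) (γ i).1) ∧
        Tendsto y atTop (𝓝 x) ∧ Tendsto (fun i => F (γ i)) atTop (𝓝 ξ)}

/-- The set of perpendicular directions to `X` at `x`: directions of the perpendiculars
`t ↦ η p t` with `η0 p = x`. -/
def perpDirectionSet {Y : Type*} [MetricSpace Y] {C0 : Type*}
    (η : C0 → ℝ → Y) (η0 : C0 → Y) (x : Y) {S : Type*} [MetricSpace S]
    (F : {γ : ℝ → Y // IsUnitSpeedGeodesicFrom x γ} → S) : Set S :=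
  {ξ | ∃ (p : C0) (h : IsUnitSpeedGeodesicFrom x (η p)), η0 p = x ∧ F ⟨η p, h⟩ = ξ}

/-- `S` is the spherical suspension with vertices `ξ₁, ξ₂` over the subset `E ⊆ S`
(the equator), via the spherical-suspension distance formula. -/
def IsSphericalSuspensionOver {S : Type*} [MetricSpace S] (ξ₁ ξ₂ : S) (E : Set S) : Prop :=
  ∃ Φ : E → ℝ → S,
    (∀ v : S, ∃ e : E, ∃ s ∈ Set.Icc (0 : ℝ) Real.pi, Φ e s = v) ∧
    (∀ e, Φ e 0 = ξ₁) ∧ (∀ e, Φ e Real.pi = ξ₂) ∧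
    (∀ e, Φ e (Real.pi / 2) = (e : S)) ∧
    ∀ (e e' : E), ∀ s ∈ Set.Icc (0 : ℝ) Real.pi, ∀ s' ∈ Set.Icc (0 : ℝ) Real.pi,
      Real.cos (dist (Φ e s) (Φ e' s')) =
        Real.cos s * Real.cos s' +
          Real.sin s * Real.sin s' * Real.cos (min (dist (e : S) (e' : S)) Real.pi)

/-- `S` is a spherical suspension with the two vertices `ξ₁, ξ₂`. -/
def IsSphericalSuspensionWithVertices {S : Type*} [MetricSpace S] (ξ₁ ξ₂ : S) : Prop :=
  ∃ E : Set S, IsSphericalSuspensionOver ξ₁ ξ₂ E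

/-- The Euclidean cone distance over a metric space (on pairs (direction, radius)). -/
noncomputable def coneDist {S : Type*} [MetricSpace S] (u v : S × ℝ) : ℝ :=
  Real.sqrt (u.2 ^ 2 + v.2 ^ 2 - 2 * u.2 * v.2 * Real.cos (min (dist u.1 v.1) Real.pi))

/-! ## Warped products and glued length metrics -/

/-- Length of the curve `(σ, ν)` in the warped product `A ×_φ ℝ` (supremum over
partitions of `[0,1]`). -/
noncomputable def warpedLengthE {A : Type*} [MetricSpace A] (φ : ℝ → ℝ)
    (σ : ℝ → A) (ν : ℝ → ℝ) : ℝ≥0∞ :=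
  ⨆ (n : ℕ) (t : Fin (n + 1) → ℝ) (_ : Monotone t)
      (_ : ∀ i, t i ∈ Set.Icc (0 : ℝ) 1) (_ : t 0 = 0) (_ : t (Fin.last n) = 1),
    ∑ i : Fin n, ENNReal.ofReal
      (Real.sqrt ((φ (ν (t i.castSucc))) ^ 2 * (dist (σ (t i.castSucc)) (σ (t i.succ))) ^ 2 +
        (ν (t i.succ) - ν (t i.castSucc)) ^ 2))

/-- The warped product distance on `A ×_φ [0,t0]`. -/
noncomputable def warpedDist {A : Type*} [MetricSpace A] (φ : ℝ → ℝ) (t0 : ℝ)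
    (x y : A × ℝ) : ℝ≥0∞ :=
  ⨅ (σ : ℝ → A) (ν : ℝ → ℝ) (_ : ContinuousOn σ (Set.Icc 0 1))
    (_ : ContinuousOn ν (Set.Icc 0 1)) (_ : ∀ s ∈ Set.Icc (0 : ℝ) 1, ν s ∈ Set.Icc (0 : ℝ) t0)
    (_ : σ 0 = x.1) (_ : ν 0 = x.2) (_ : σ 1 = y.1) (_ : ν 1 = y.2),
    warpedLengthE φ σ ν

/-- The chain (quotient length) distance generated by an elementary cost `D`. -/
noncomputable def chainDist {Z : Type*} (D : Z → Z → ℝ≥0∞) (a b : Z) : ℝ≥0∞ :=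
  ⨅ (n : ℕ) (c : Fin (n + 1) → Z) (_ : c 0 = a) (_ : c (Fin.last n) = b),
    ∑ i : Fin n, D (c i.castSucc) (c i.succ)

/-! ## Topological fibre bundles and model spaces -/

/-- `π` is a trivial bundle with fibre `F` over `U`. -/
def IsLocallyTrivialOver {E B : Type*} [TopologicalSpace E] [TopologicalSpace B]
    (F : Type*) [TopologicalSpace F] (π : E → B) (U : Set B) : Prop :=
  ∃ h : (π ⁻¹' U) ≃ₜ U × F, ∀ e : π ⁻¹' U, ((h e).1 : B) = π (e : E)

/-- `π` is a locally trivial fibre bundle with fibre `F`. -/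
def IsLocallyTrivialBundle {E B : Type*} [TopologicalSpace E] [TopologicalSpace B]
    (F : Type*) [TopologicalSpace F] (π : E → B) : Prop :=
  Continuous π ∧ Function.Surjective π ∧ ∀ b : B, ∃ U ∈ 𝓝 b, IsLocallyTrivialOver F π U

/-- Negation on `[-1,1]`. -/
def negIcc (t : Set.Icc (-1 : ℝ) 1) : Set.Icc (-1 : ℝ) 1 :=
  ⟨-(t : ℝ), Set.mem_Icc.mpr
    ⟨by linarith [(Set.mem_Icc.mp t.2).2], by linarith [(Set.mem_Icc.mp t.2).1]⟩⟩

/-- The identification `(0,y) ∼ (0,-y)` on `[0,1) × [-1,1]`. -/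
def RModelRel (a b : Set.Ico (0 : ℝ) 1 × Set.Icc (-1 : ℝ) 1) : Prop :=
  (a.1 : ℝ) = 0 ∧ (b.1 : ℝ) = 0 ∧ (b.2 : ℝ) = -(a.2 : ℝ)

/-- The model `R = [0,1) × [-1,1] / (0,y) ∼ (0,-y)` for singular `I`-fibres. -/
def RModel : Type := Quot RModelRel

instance : TopologicalSpace RModel := by unfold RModel; infer_instance

/-- The projection `R → [0,1)`. -/
def RModel.proj : RModel → Set.Ico (0 : ℝ) 1 :=
  Quot.lift (fun a => a.1) (fun _ _ h => Subtype.ext (h.1.trans h.2.1.symm))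

/-- The reflection `(x,y) ↦ (x,-y)` of `R`. -/
def RModel.reflect : RModel → RModel :=
  Quot.lift (fun a => Quot.mk RModelRel (a.1, negIcc a.2))
    (fun a b h => Quot.sound ⟨h.1, h.2.1, by
      show -(b.2 : ℝ) = -(-(a.2 : ℝ)); rw [h.2.2]⟩)

/-- Twisted `I`-bundle `(P × [-1,1]) / (x,t) ∼ (σ x, -t)`. -/
def TwistedIBundle (P : Type*) (σ : P → P) :=
  Quot (fun a b : P × Set.Icc (-1 : ℝ) 1 => b = (σ a.1, negIcc a.2))

instance (P : Type*) [TopologicalSpace P] (σ : P → P) :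
    TopologicalSpace (TwistedIBundle P σ) := by unfold TwistedIBundle; infer_instance

/-- Twisted singular-`I`-bundle model `(P × R) / (p, r) ∼ (σ p, reflect r)`. -/
def TwistedRModel (P : Type*) (σ : P → P) :=
  Quot (fun a b : P × RModel => b = (σ a.1, RModel.reflect a.2))

instance (P : Type*) [TopologicalSpace P] (σ : P → P) :
    TopologicalSpace (TwistedRModel P σ) := by unfold TwistedRModel; infer_instance

/-- `a ∼ b` iff they are corresponding boundary points of the two copies. -/
def DoubleSpaceRel (N : Type*) (B : Set N) (a b : N ⊕ N) : Prop :=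
  ∃ x ∈ B, a = Sum.inl x ∧ b = Sum.inr x

/-- The double `D(N)` of `N` along `B` (two copies glued along `B`). -/
def DoubleSpace (N : Type*) (B : Set N) := Quot (DoubleSpaceRel N B)

instance (N : Type*) [TopologicalSpace N] (B : Set N) :
    TopologicalSpace (DoubleSpace N B) := by unfold DoubleSpace; infer_instance

/-- The canonical reflection of the double. -/
def DoubleSpace.reflect (N : Type*) (B : Set N) : DoubleSpace N B → DoubleSpace N B :=
  Quot.lift (fun a => Quot.mk _ a.swap)
    (by rintro a b ⟨x, hx, rfl, rfl⟩; exact (Quot.sound ⟨x, hx, rfl, rfl⟩).symm)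

/-- The upper half disk `D²₊`. -/
def upperHalfDisk : Set (ℝ × ℝ) := {z | z.1 ^ 2 + z.2 ^ 2 ≤ 1 ∧ 0 ≤ z.2}

/-- `π⁻¹(V)` is isomorphic (as a singular `I`-fibred space over the collar
`φc : V ≃ Bc × [0,1)`) to the product singular `I`-bundle model `Bc × R`. -/
def ProductSingularModel {M N : Type*} [TopologicalSpace M] [TopologicalSpace N]
    (π : M → N) (V : Set N) (Bc : Set N)
    (φc : V ≃ₜ Bc × Set.Ico (0 : ℝ) 1) : Prop :=
  ∃ h : (π ⁻¹' V) ≃ₜ Bc × RModel,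
    ∀ e : π ⁻¹' V, (φc ⟨π (e : M), e.2⟩).1 = (h e).1 ∧
      (φc ⟨π (e : M), e.2⟩).2 = RModel.proj (h e).2

/-- `π⁻¹(V)` is isomorphic to the twisted singular `I`-bundle model
`(P × R)/Φ` over `Bc`, for some free two-fold covering involution of `P`. -/
def TwistedSingularModel {M N : Type*} [TopologicalSpace M] [TopologicalSpace N]
    (π : M → N) (V : Set N) (Bc : Set N) : Prop :=
  ∃ (P : TopCat.{0}) (ρ : P → Bc) (σ : P → P),
    IsCoveringMap ρ ∧ (∀ x : Bc, Set.ncard (ρ ⁻¹' {x}) = 2) ∧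
    Continuous σ ∧ (∀ p, ρ (σ p) = ρ p) ∧ (∀ p, σ (σ p) = p) ∧ (∀ p, σ p ≠ p) ∧
    Nonempty ((π ⁻¹' V) ≃ₜ TwistedRModel P σ)

/-! ## The limit setting of inradius collapse -/

/-- The limit configuration of an inradius collapsing sequence
`M_i ∈ 𝓜(n,κ,λ,d)`, `inrad(M_i) → 0`:  `N` is the GH-limit of the `M_i`; the extensions
`\tilde M_i = M_i ∪_{∂M_i} (∂M_i ×_φ [0,t0])` converge to the compact Alexandrov space
`Y`; the `M_i` with exterior metric converge to the closed subset `X ⊆ Y`; the intrinsic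
boundaries `(∂M_i)^int` converge to `C0`; and `η : C0 × [0,t0] → Y` is the limit gluing
map (`η p` is the perpendicular to `X` at `η0 p`), with `η0 = η(·,0) : C0 → X`. -/
structure InradiusCollapseLimit : Type 1 where
  n : ℕ
  κ : ℝ
  lam : ℝ
  d : ℝ
  Msec : ℕ → CompactManifoldBdry
  mem : ∀ i, (Msec i).memClass n κ lam d
  N : Type
  [metN : MetricSpace N]
  [cptN : CompactSpace N]
  [neN : Nonempty N]
  lengthN : IsLengthSpace N
  collapse : inradiusCollapsesTo Msec N
  t0 : ℝ
  ε0 : ℝ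
  ht0 : 0 < t0
  hε0 : 0 < ε0 ∧ ε0 < 1
  φ : ℝ → ℝ
  hφ0 : φ 0 = 1
  hφt0 : φ t0 = ε0
  hφpos : ∀ t ∈ Set.Icc (0 : ℝ) t0, 0 < φ t
  hφanti : AntitoneOn φ (Set.Icc (0 : ℝ) t0)
  Y : Type
  [metY : MetricSpace Y]
  [cptY : CompactSpace Y]
  [neY : Nonempty Y]
  alexY : ∃ c : ℝ, IsAlexandrovCurvGE Y c
  X : Set Y
  hXclosed : IsClosed X
  hXne : X.Nonempty
  hXapprox : ∀ ε > (0 : ℝ), ∀ᶠ i in Filter.atTop, ∃ g : (Msec i).M → Y,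
      (∀ a, g a ∈ X) ∧ (∀ x ∈ X, ∃ a, dist (g a) x < ε) ∧
      (∀ a b, dist (g a) (g b) ≤ dist a b + ε) ∧
      (∀ a b, dist a b ≤ dist (g a) (g b) / ε0 + ε)
  C0 : Type
  [metC0 : MetricSpace C0]
  [cptC0 : CompactSpace C0]
  [neC0 : Nonempty C0]
  lengthC0 : IsLengthSpace C0
  hC0approx : ∀ ε > (0 : ℝ), ∀ᶠ i in Filter.atTop, ∃ ψ : (Msec i).boundary → C0,
      (∀ p : C0, ∃ a, dist (ψ a) p < ε) ∧
      ∀ a b : (Msec i).boundary,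
        |dist (ψ a) (ψ b) -
          (intrinsicDist (Msec i).boundary (a : (Msec i).M) (b : (Msec i).M)).toReal| < ε
  η : C0 → ℝ → Y
  η0 : C0 → Y
  hη0 : ∀ p, η0 p = η p 0
  hη0X : ∀ p, η0 p ∈ X
  hη0surj : ∀ x ∈ X, ∃ p, η0 p = x
  hperp : ∀ p, ∀ s ∈ Set.Icc (0 : ℝ) t0, ∀ t ∈ Set.Icc (0 : ℝ) t0,
      dist (η p s) (η p t) = |s - t|
  hdistX : ∀ p, ∀ t ∈ Set.Icc (0 : ℝ) t0, Metric.infDist (η p t) X = t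
  hηsurj : ∀ y : Y, ∃ p, ∃ t ∈ Set.Icc (0 : ℝ) t0, η p t = y
  hηinj : ∀ p q s t, s ∈ Set.Ioc (0 : ℝ) t0 → t ∈ Set.Ioc (0 : ℝ) t0 →
      η p s = η q t → p = q ∧ s = t
  hηslices : ∀ p q : C0, ∀ t ∈ Set.Icc (0 : ℝ) t0, dist (η p t) (η q t) ≤ dist p q

attribute [instance] InradiusCollapseLimit.metN InradiusCollapseLimit.cptN
  InradiusCollapseLimit.neN InradiusCollapseLimit.metY InradiusCollapseLimit.cptY
  InradiusCollapseLimit.neY InradiusCollapseLimit.metC0 InradiusCollapseLimit.cptC0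
  InradiusCollapseLimit.neC0

namespace InradiusCollapseLimit

/-- `X_1`: points of `X` with exactly one `η0`-preimage. -/
def X1set (S : InradiusCollapseLimit) : Set S.Y :=
  {x | x ∈ S.X ∧ ∃! p : S.C0, S.η0 p = x}

/-- `X_2`: points of `X` with (exactly) two `η0`-preimages. -/
def X2set (S : InradiusCollapseLimit) : Set S.Y :=
  {x | x ∈ S.X ∧ ∃ p q : S.C0, p ≠ q ∧ S.η0 p = x ∧ S.η0 q = x}

/-- Elementary cost for building the glued length space `X^int ∪_{η0} C0 ×_φ [0,t0]`:
within each piece, the respective length metric; across the pieces, only the gluing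
identification `(p,0) ∼ η0 p` (at cost `0`). -/
noncomputable def gluedPieceDist (S : InradiusCollapseLimit) :
    ((↥S.X) ⊕ (S.C0 × ℝ)) → ((↥S.X) ⊕ (S.C0 × ℝ)) → ℝ≥0∞
  | Sum.inl x, Sum.inl x' => intrinsicDist S.X (x : S.Y) (x' : S.Y)
  | Sum.inr c, Sum.inr c' => warpedDist S.φ S.t0 c c'
  | Sum.inl x, Sum.inr c => if S.η0 c.1 = (x : S.Y) ∧ c.2 = 0 then 0 else ⊤
  | Sum.inr c, Sum.inl x => if S.η0 c.1 = (x : S.Y) ∧ c.2 = 0 then 0 else ⊤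

/-- The underlying set of the glued space `X^int ∪_{η0} C0 ×_φ [0,t0]`. -/
def gluedDomain (S : InradiusCollapseLimit) : Set ((↥S.X) ⊕ (S.C0 × ℝ)) :=
  Set.range Sum.inl ∪ Sum.inr '' {c : S.C0 × ℝ | c.2 ∈ Set.Icc (0 : ℝ) S.t0}

/-- Elementary cost for the quotient `C0 ×_φ [0,t0] / (p,0) ∼ (f p,0)`. -/
noncomputable def quotWarpedPieceDist (S : InradiusCollapseLimit) (f : S.C0 → S.C0) :
    (S.C0 × ℝ) → (S.C0 × ℝ) → ℝ≥0∞ :=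
  fun a b =>
    min (warpedDist S.φ S.t0 a b)
      (if a.2 = 0 ∧ b.2 = 0 ∧ (b.1 = f a.1 ∨ b.1 = a.1) then 0 else ⊤)

end InradiusCollapseLimit

end

theorem dcov_model_degenerate (c a b : ℝ) (ha : 0 < a) (hb : 0 < b)
    (hca : √c * a < 3) (hcb : √c * b < 3) :
    modelCosAngle c a b (a + b) = -1 := by
  unfold modelCosAngle
  split_ifs with h0 h1
  · field_simp
    ring
  · have hk : 0 < √c := Real.sqrt_pos.mpr h1
    have h3 := Real.pi_gt_three
    have s1 : 0 < Real.sin (√c * a) := Real.sin_pos_of_pos_of_lt_pi (by positivity) (by linarith)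
    have s2 : 0 < Real.sin (√c * b) := Real.sin_pos_of_pos_of_lt_pi (by positivity) (by linarith)
    rw [mul_add, Real.cos_add, div_eq_iff (by positivity)]
    ring
  · have hk : 0 < √(-c) := Real.sqrt_pos.mpr (by
      rcases lt_trichotomy c 0 with h | h | h
      · linarith
      · exact absurd h h0
      · exact absurd h h1)
    have s1 : 0 < Real.sinh (√(-c) * a) := Real.sinh_pos_iff.mpr (by positivity)
    have s2 : 0 < Real.sinh (√(-c) * b) := Real.sinh_pos_iff.mpr (by positivity)
    rw [mul_add, Real.cosh_add, div_eq_iff (by positivity)]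
    ring

theorem dcov_model_tendsto (c s : ℝ) (hs : 0 < s) (hcs : √c * s < 1)
    (a b d : ℕ → ℝ) (ha : Tendsto a atTop (𝓝 s)) (hb : Tendsto b atTop (𝓝 s))
    (hd : Tendsto d atTop (𝓝 (s + s))) :
    Tendsto (fun i => comparisonAngle c (a i) (b i) (d i)) atTop (𝓝 Real.pi) := by
  have hval := dcov_model_degenerate c s s hs hs (by linarith) (by linarith)
  have hcont : ContinuousAt (fun v : ℝ × ℝ × ℝ => modelCosAngle c v.1 v.2.1 v.2.2)
      (s, s, s + s) := by
    unfold modelCosAngle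
    split_ifs with h0 h1
    · refine ContinuousAt.div (by fun_prop) (by fun_prop) ?_
      simp only
      positivity
    · have hk : 0 < √c := Real.sqrt_pos.mpr h1
      have h3 := Real.pi_gt_three
      have s1 : 0 < Real.sin (√c * s) :=
        Real.sin_pos_of_pos_of_lt_pi (by positivity) (by linarith)
      refine ContinuousAt.div (by fun_prop) (by fun_prop) ?_
      simp only
      positivity
    · have hk : 0 < √(-c) := Real.sqrt_pos.mpr (by
        rcases lt_trichotomy c 0 with h | h | h
        · linarith
        · exact absurd h h0
        · exact absurd h h1)
      have s1 : 0 < Real.sinh (√(-c) * s) := Real.sinh_pos_iff.mpr (by positivity)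
      refine ContinuousAt.div (by fun_prop) (by fun_prop) ?_
      simp only
      positivity
  have h1 : Tendsto (fun i => modelCosAngle c (a i) (b i) (d i)) atTop (𝓝 (-1)) := by
    have := hcont.tendsto.comp (ha.prodMk_nhds (hb.prodMk_nhds hd))
    simpa [hval, Function.comp_def] using this
  have h2 := (Real.continuous_arccos.tendsto (-1)).comp h1
  rw [Real.arccos_neg_one] at h2
  exact h2

theorem dcov_model_le_half (c s : ℝ) (hs : 0 < s) (hcs : √c * s < 1)
    (a r d : ℕ → ℝ) (ha : Tendsto a atTop (𝓝 s)) (hr : Tendsto r atTop (𝓝 0))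
    (hr0 : ∀ i, 0 < r i) (had : ∀ i, a i ≤ d i) (hd : Tendsto d atTop (𝓝 s)) :
    ∀ᶠ i in atTop, modelCosAngle c (a i) (r i) (d i) ≤ 1 / 2 := by
  have hapos : ∀ᶠ i in atTop, 0 < a i := ha.eventually (lt_mem_nhds hs)
  unfold modelCosAngle
  split_ifs with h0 h1
  · have hra : ∀ᶠ i in atTop, r i < a i := hr.eventually_lt ha hs
    filter_upwards [hapos, hra] with i h1 h2
    have h3 := hr0 i
    have h4 := had i
    rw [div_le_iff₀ (by positivity)]
    nlinarith
  · have hk : 0 < √c := Real.sqrt_pos.mpr h1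
    have h3 := Real.pi_gt_three
    have e1 : ∀ᶠ i in atTop, √c * a i < 1 := (ha.const_mul (√c)).eventually (gt_mem_nhds hcs)
    have e2 : ∀ᶠ i in atTop, √c * d i < 1 := (hd.const_mul (√c)).eventually (gt_mem_nhds hcs)
    have e3 : ∀ᶠ i in atTop, √c * r i < 1 :=
      (hr.const_mul (√c)).eventually (gt_mem_nhds (by simp))
    have s1 : 0 < Real.sin (√c * s) :=
      Real.sin_pos_of_pos_of_lt_pi (by positivity) (by linarith)
    have e4 : ∀ᶠ i in atTop, Real.sin (√c * r i) < 1 / 2 * Real.sin (√c * a i) := by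
      refine Tendsto.eventually_lt (y := 0) (z := 1 / 2 * Real.sin (√c * s)) ?_ ?_ (by positivity)
      · have := (Real.continuous_sin.tendsto _).comp (hr.const_mul (√c))
        simpa [Function.comp_def] using this
      · exact ((Real.continuous_sin.tendsto _).comp (ha.const_mul (√c))).const_mul _
    filter_upwards [hapos, e1, e2, e3, e4] with i g0 g1 g2 g3 g4
    have g5 := hr0 i
    have hsa : 0 < Real.sin (√c * a i) :=
      Real.sin_pos_of_pos_of_lt_pi (by positivity) (by linarith)
    have hsr : 0 < Real.sin (√c * r i) :=
      Real.sin_pos_of_pos_of_lt_pi (by positivity) (by linarith)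
    have hcr : 0 < Real.cos (√c * r i) :=
      Real.cos_pos_of_mem_Ioo ⟨by nlinarith [mul_pos hk g5], by linarith⟩
    have hca : 0 < Real.cos (√c * a i) :=
      Real.cos_pos_of_mem_Ioo ⟨by nlinarith [mul_pos hk g0], by linarith⟩
    have hmono : Real.cos (√c * d i) ≤ Real.cos (√c * a i) :=
      Real.cos_le_cos_of_nonneg_of_le_pi (by positivity) (by linarith)
        (mul_le_mul_of_nonneg_left (had i) hk.le)
    have hca1 := Real.cos_le_one (√c * a i)
    have hcr1 := Real.cos_le_one (√c * r i)
    have hsq := Real.sin_sq_add_cos_sq (√c * r i)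
    rw [div_le_iff₀ (by positivity)]
    have q1 : 1 - Real.cos (√c * r i) ≤ Real.sin (√c * r i) ^ 2 := by nlinarith
    have q2 : Real.cos (√c * a i) * (1 - Real.cos (√c * r i)) ≤ 1 - Real.cos (√c * r i) := by
      nlinarith
    have q3 : Real.sin (√c * r i) ^ 2 ≤
        1 / 2 * Real.sin (√c * a i) * Real.sin (√c * r i) := by
      nlinarith
    linarith
  · have hk : 0 < √(-c) := Real.sqrt_pos.mpr (by
        rcases lt_trichotomy c 0 with h | h | h
        · linarith
        · exact absurd h h0
        · exact absurd h h1)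
    have s1 : 0 < Real.sinh (√(-c) * s) := Real.sinh_pos_iff.mpr (by positivity)
    have e4 : ∀ᶠ i in atTop, Real.cosh (√(-c) * a i) * Real.sinh (√(-c) * r i) <
        1 / 2 * Real.sinh (√(-c) * a i) := by
      refine Tendsto.eventually_lt (y := Real.cosh (√(-c) * s) * 0)
        (z := 1 / 2 * Real.sinh (√(-c) * s)) ?_ ?_ (by rw [mul_zero]; positivity)
      · refine ((Real.continuous_cosh.tendsto _).comp (ha.const_mul (√(-c)))).mul ?_
        have := (Real.continuous_sinh.tendsto _).comp (hr.const_mul (√(-c)))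
        simpa [Function.comp_def] using this
      · exact ((Real.continuous_sinh.tendsto _).comp (ha.const_mul (√(-c)))).const_mul _
    filter_upwards [hapos, e4] with i g0 g4
    have g5 := hr0 i
    have hsa : 0 < Real.sinh (√(-c) * a i) := Real.sinh_pos_iff.mpr (by positivity)
    have hsr : 0 < Real.sinh (√(-c) * r i) := Real.sinh_pos_iff.mpr (by positivity)
    have hmono : Real.cosh (√(-c) * a i) ≤ Real.cosh (√(-c) * d i) := by
      have hle := mul_le_mul_of_nonneg_left (had i) hk.le
      have hp : 0 < √(-c) * a i := by positivity
      rw [Real.cosh_le_cosh, abs_of_pos hp, abs_of_pos (hp.trans_le hle)]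
      exact hle
    have hca1 := Real.one_le_cosh (√(-c) * a i)
    have hcr1 := Real.one_le_cosh (√(-c) * r i)
    have hsq := Real.cosh_sq (√(-c) * r i)
    rw [div_le_iff₀ (by positivity)]
    have q1 : Real.cosh (√(-c) * r i) - 1 ≤ Real.sinh (√(-c) * r i) ^ 2 := by nlinarith
    have q2 : Real.cosh (√(-c) * a i) * (Real.cosh (√(-c) * r i) - 1) ≤
        Real.cosh (√(-c) * a i) * Real.sinh (√(-c) * r i) ^ 2 :=
      mul_le_mul_of_nonneg_left q1 (by linarith)
    have q3 : Real.cosh (√(-c) * a i) * Real.sinh (√(-c) * r i) ^ 2 ≤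
        1 / 2 * Real.sinh (√(-c) * a i) * Real.sinh (√(-c) * r i) := by
      nlinarith
    linarith

/-- Joint Lipschitz estimate for the limit gluing map. -/
theorem dcov_eta_dist (S : InradiusCollapseLimit) (p q : S.C0) (s t : ℝ)
    (hs : s ∈ Set.Icc (0 : ℝ) S.t0) (ht : t ∈ Set.Icc (0 : ℝ) S.t0) :
    dist (S.η p s) (S.η q t) ≤ dist p q + |s - t| := by
  have h1 := S.hηslices p q s hs
  have h2 := S.hperp q s hs t ht
  linarith [dist_triangle (S.η p s) (S.η q s) (S.η q t)]

theorem dcov_eta0_dist (S : InradiusCollapseLimit) (p q : S.C0) :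
    dist (S.η0 p) (S.η0 q) ≤ dist p q := by
  rw [S.hη0, S.hη0]
  exact S.hηslices p q 0 ⟨le_refl _, S.ht0.le⟩

theorem dcov_eta0_cont (S : InradiusCollapseLimit) : Continuous S.η0 :=
  (LipschitzWith.of_dist_le_mul (K := 1) (fun p q => by
    simpa using dcov_eta0_dist S p q)).continuous

theorem dcov_eta_contOn (S : InradiusCollapseLimit) :
    ContinuousOn (fun v : S.C0 × ℝ => S.η v.1 v.2) (Set.univ ×ˢ Set.Icc (0 : ℝ) S.t0) := by
  rw [Metric.continuousOn_iff]
  rintro ⟨p, s⟩ hps ε hε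
  refine ⟨ε / 2, by positivity, ?_⟩
  rintro ⟨q, t⟩ hqt hd
  rw [Prod.dist_eq, max_lt_iff] at hd
  have := dcov_eta_dist S q p t s hqt.2 hps.2
  have h2 : |t - s| < ε / 2 := by simpa [Real.dist_eq] using hd.2
  simp only at *
  linarith [hd.1]

theorem dcov_foot (S : InradiusCollapseLimit) (p : S.C0) (t : ℝ)
    (ht : t ∈ Set.Icc (0 : ℝ) S.t0) : dist (S.η p t) (S.η0 p) = t := by
  rw [S.hη0, S.hperp p t ht 0 ⟨le_refl _, S.ht0.le⟩, sub_zero, abs_of_nonneg ht.1]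

theorem dcov_le_dist (S : InradiusCollapseLimit) (p : S.C0) (t : ℝ)
    (ht : t ∈ Set.Icc (0 : ℝ) S.t0) (x : S.Y) (hx : x ∈ S.X) : t ≤ dist (S.η p t) x := by
  have := Metric.infDist_le_dist_of_mem (x := S.η p t) hx
  rwa [S.hdistX p t ht] at this

/-- The two perpendiculars over a point of `X_2` form a geodesic near that point. -/
theorem dcov_opposite (S : InradiusCollapseLimit)
    (hfib : ∀ x : S.Y, ∃ a b : S.C0, {p : S.C0 | S.η0 p = x} ⊆ {a, b})
    (p q : S.C0) (hpq : p ≠ q) (heq : S.η0 p = S.η0 q) :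
    ∃ s1 > (0 : ℝ), s1 ≤ S.t0 ∧ ∀ s, 0 < s → s < s1 → dist (S.η p s) (S.η q s) = s + s := by
  obtain ⟨c, hgeo, -⟩ := S.alexY
  set x := S.η0 p with hx
  have hfib' : ∀ w, S.η0 w = x → w = p ∨ w = q := by
    intro w hw
    obtain ⟨a, b, hab⟩ := hfib x
    have h1 : w ∈ ({a, b} : Set S.C0) := hab hw
    have h2 : p ∈ ({a, b} : Set S.C0) := hab rfl
    have h3 : q ∈ ({a, b} : Set S.C0) := hab heq.symm
    simp only [Set.mem_insert_iff, Set.mem_singleton_iff] at h1 h2 h3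
    grind
  set ρ := dist p q / 2 with hρ
  have hρ0 : 0 < ρ := by have := dist_pos.mpr hpq; positivity
  obtain ⟨δ, hδ, hδ'⟩ : ∃ δ > (0 : ℝ), ∀ w ∈ Metric.sphere p ρ, δ ≤ dist x (S.η0 w) := by
    rcases (Metric.sphere p ρ).eq_empty_or_nonempty with he | hne
    · exact ⟨1, one_pos, by simp [he]⟩
    · obtain ⟨w, hw, hmin⟩ := (isCompact_sphere p ρ).exists_isMinOn hne
        (f := fun w => dist x (S.η0 w))
        (continuous_const.dist (dcov_eta0_cont S)).continuousOn
      refine ⟨dist x (S.η0 w), dist_pos.mpr ?_, fun v hv => hmin hv⟩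
      intro h
      rw [Metric.mem_sphere] at hw
      rcases hfib' w h.symm with h | h
      · rw [h, dist_self] at hw
        linarith
      · rw [h, dist_comm] at hw
        linarith
  refine ⟨min S.t0 (δ / 6), lt_min S.ht0 (by positivity), min_le_left _ _, ?_⟩
  intro s hs0 hs1
  have hsI : s ∈ Set.Icc (0 : ℝ) S.t0 := ⟨hs0.le, (hs1.le.trans (min_le_left _ _))⟩
  have hsδ : 6 * s < δ := by have := hs1.trans_le (min_le_right _ _); linarith
  have fp := dcov_foot S p s hsI
  have fq := dcov_foot S q s hsI
  rw [← heq] at fq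
  rw [← hx] at fp
  have hup : dist (S.η p s) (S.η q s) ≤ s + s := by
    have := dist_triangle_right (S.η p s) (S.η q s) x
    linarith
  refine le_antisymm hup ?_
  obtain ⟨γ, γ0, γ1, γd⟩ := hgeo (S.η p s) (S.η q s)
  set L := dist (S.η p s) (S.η q s) with hL
  have hL0 : 0 ≤ L := dist_nonneg
  have γc : ContinuousOn γ (Set.Icc 0 L) := by
    rw [Metric.continuousOn_iff]
    intro b hb ε hε
    refine ⟨ε, hε, fun a ha hd => ?_⟩
    rwa [γd a ha b hb, ← Real.dist_eq]
  -- the geodesic meets `X`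
  have hmeet : ∃ t ∈ Set.Icc 0 L, γ t ∈ S.X := by
    by_contra hno
    push Not at hno
    let K1 : Set S.Y := (fun v : S.C0 × ℝ => S.η v.1 v.2) ''
      (Metric.closedBall p ρ ×ˢ Set.Icc (0 : ℝ) S.t0)
    let K2 : Set S.Y := (fun v : S.C0 × ℝ => S.η v.1 v.2) ''
      ({w | ρ ≤ dist w p} ×ˢ Set.Icc (0 : ℝ) S.t0)
    have hK1 : IsClosed K1 := by
      refine IsCompact.isClosed (IsCompact.image_of_continuousOn ?_ ?_)
      · exact (isCompact_closedBall p ρ).prod isCompact_Icc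
      · exact (dcov_eta_contOn S).mono (Set.prod_mono (Set.subset_univ _) le_rfl)
    have hK2 : IsClosed K2 := by
      refine IsCompact.isClosed (IsCompact.image_of_continuousOn ?_ ?_)
      · refine IsCompact.prod (IsClosed.isCompact ?_) isCompact_Icc
        exact isClosed_le continuous_const (continuous_id.dist continuous_const)
      · exact (dcov_eta_contOn S).mono (Set.prod_mono (Set.subset_univ _) le_rfl)
    have hconn : IsPreconnected (γ '' Set.Icc 0 L) := isPreconnected_Icc.image γ γc
    have hcov : γ '' Set.Icc 0 L ⊆ K1 ∪ K2 := by
      intro y _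
      obtain ⟨w, t, ht, rfl⟩ := S.hηsurj y
      rcases le_total (dist w p) ρ with h | h
      · exact Or.inl ⟨(w, t), ⟨h, ht⟩, rfl⟩
      · exact Or.inr ⟨(w, t), ⟨h, ht⟩, rfl⟩
    obtain ⟨y, ⟨t, ht, rfl⟩, ⟨⟨w, τ⟩, ⟨hw, hτ⟩, e1⟩, ⟨⟨w', τ'⟩, ⟨hw', hτ'⟩, e2⟩⟩ :=
      isPreconnected_closed_iff.mp hconn K1 K2 hK1 hK2 hcov
        ⟨γ 0, ⟨0, ⟨le_rfl, hL0⟩, rfl⟩, (p, s), ⟨by simp [hρ0.le], hsI⟩, γ0.symm⟩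
        ⟨γ L, ⟨L, ⟨hL0, le_rfl⟩, rfl⟩, (q, s), ⟨by
          change ρ ≤ dist q p; rw [dist_comm]; linarith, hsI⟩, γ1.symm⟩
    simp only at e1 e2 hw hτ hw' hτ'
    have pos : ∀ (v : S.C0) (σ : ℝ), σ ∈ Set.Icc (0 : ℝ) S.t0 → S.η v σ = γ t → 0 < σ := by
      intro v σ hσ e
      rcases hσ.1.lt_or_eq with h | h
      · exact h
      · exfalso
        apply hno t ht
        rw [← e, ← h, ← S.hη0]
        exact S.hη0X v
    have p1 := pos w τ hτ e1
    have p2 := pos w' τ' hτ' e2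
    obtain ⟨rfl, rfl⟩ := S.hηinj w w' τ τ' ⟨p1, hτ.2⟩ ⟨p2, hτ'.2⟩ (e1.trans e2.symm)
    have hsph : w ∈ Metric.sphere p ρ := le_antisymm hw hw'
    have h1 := hδ' w hsph
    have h2 := dcov_foot S w τ hτ
    have h3 : dist (γ t) (S.η p s) ≤ s + s := by
      have := γd t ht 0 ⟨le_rfl, hL0⟩
      rw [γ0, sub_zero, abs_of_nonneg ht.1] at this
      linarith [ht.2]
    have h4 : τ ≤ dist (S.η w τ) x := dcov_le_dist S w τ hτ x (S.hη0X p)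
    rw [← e1] at h3
    have h5 := dist_triangle (S.η w τ) (S.η p s) x
    have h6 := dist_triangle_left x (S.η0 w) (S.η w τ)
    linarith
  obtain ⟨t, ht, htX⟩ := hmeet
  have h1 := γd 0 ⟨le_rfl, hL0⟩ t ht
  have h2 := γd L ⟨hL0, le_rfl⟩ t ht
  rw [γ0, zero_sub, abs_neg, abs_of_nonneg ht.1] at h1
  rw [γ1, abs_of_nonneg (by linarith [ht.2])] at h2
  have h3 := dcov_le_dist S p s hsI _ htX
  have h4 := dcov_le_dist S q s hsI _ htX
  linarith

/-- The map `η0 : C0 → X` is open at points of `C0²`. -/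
theorem dcov_open_at (S : InradiusCollapseLimit)
    (hfib : ∀ x : S.Y, ∃ a b : S.C0, {p : S.C0 | S.η0 p = x} ⊆ {a, b})
    (p q : S.C0) (hpq : p ≠ q) (heq : S.η0 p = S.η0 q) (V : Set S.C0) (hV : V ∈ 𝓝 p) :
    S.η0 '' V ∈ 𝓝[S.X] (S.η0 p) := by
  obtain ⟨s1, hs1, hs1t, hopp⟩ := dcov_opposite S hfib p q hpq heq
  obtain ⟨c, hgeo, hcomp⟩ := S.alexY
  set x := S.η0 p with hx
  have hfib' : ∀ w, S.η0 w = x → w = p ∨ w = q := by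
    intro w hw
    obtain ⟨a, b, hab⟩ := hfib x
    have h1 : w ∈ ({a, b} : Set S.C0) := hab hw
    have h2 : p ∈ ({a, b} : Set S.C0) := hab rfl
    have h3 : q ∈ ({a, b} : Set S.C0) := hab heq.symm
    simp only [Set.mem_insert_iff, Set.mem_singleton_iff] at h1 h2 h3
    grind
  obtain ⟨ρ, hρ, hρV⟩ := Metric.nhds_basis_closedBall.mem_iff.mp hV
  obtain ⟨s, hs0, hss1, hcs⟩ : ∃ s : ℝ, 0 < s ∧ s < s1 ∧ √c * s < 1 := by
    have hk := Real.sqrt_nonneg c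
    have hm : 0 < min s1 (1 / (√c + 1)) := lt_min hs1 (by positivity)
    refine ⟨min s1 (1 / (√c + 1)) / 2, by positivity, ?_, ?_⟩
    · linarith [min_le_left s1 (1 / (√c + 1))]
    · have h1 : min s1 (1 / (√c + 1)) / 2 < 1 / (√c + 1) := by
        linarith [min_le_right s1 (1 / (√c + 1))]
      rw [lt_div_iff₀ (by positivity)] at h1
      nlinarith
  have hsI : s ∈ Set.Icc (0 : ℝ) S.t0 := ⟨hs0.le, by linarith⟩
  have hpqs := hopp s hs0 hss1
  by_contra hcon
  set y := S.η p s with hy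
  have hyx : dist y x = s := dcov_foot S p s hsI
  -- data close to `x`
  have hdata : ∀ n : ℕ, ∃ (x' z : S.Y) (w : S.C0) (τ : ℝ), x' ∈ S.X ∧
      dist x' x < 1 / ((n : ℝ) + 1) ∧ 0 < dist z x' ∧ dist z x' ≤ 1 / ((n : ℝ) + 1) ∧
      dist x' y = dist z x' + dist z y ∧ τ ∈ Set.Icc (0 : ℝ) S.t0 ∧ τ ≤ s ∧ S.η w τ = z ∧
      τ ≤ dist z x' ∧ w ∉ Metric.closedBall p ρ := by
    intro n
    have hn : (0 : ℝ) < 1 / ((n : ℝ) + 1) := by positivity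
    obtain ⟨x', hx'X, hx'd, hx'V⟩ : ∃ x' ∈ S.X, dist x' x < 1 / ((n : ℝ) + 1) ∧
        x' ∉ S.η0 '' V := by
      by_contra hne
      push Not at hne
      apply hcon
      rw [Metric.mem_nhdsWithin_iff]
      exact ⟨_, hn, fun v hv => hne v hv.2 hv.1⟩
    have hcl : IsClosed (S.η0 '' Metric.closedBall p ρ) :=
      ((isCompact_closedBall p ρ).image (dcov_eta0_cont S)).isClosed
    have hx'n : x' ∉ S.η0 '' Metric.closedBall p ρ := fun h => hx'V (Set.image_mono hρV h)
    obtain ⟨δ, hδ, hδ'⟩ := Metric.isOpen_iff.mp hcl.isOpen_compl x' hx'n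
    set r := min (min s (δ / 3)) (1 / ((n : ℝ) + 1)) with hr
    have hr0 : 0 < r := lt_min (lt_min hs0 (by positivity)) hn
    have hrs : r ≤ s := (min_le_left _ _).trans (min_le_left _ _)
    have hrδ : r ≤ δ / 3 := (min_le_left _ _).trans (min_le_right _ _)
    have hrn : r ≤ 1 / ((n : ℝ) + 1) := min_le_right _ _
    have hsd : s ≤ dist x' y := by
      rw [dist_comm]
      exact dcov_le_dist S p s hsI x' hx'X
    obtain ⟨γ, γ0, γ1, γd⟩ := hgeo x' y
    have hrI : r ∈ Set.Icc 0 (dist x' y) := ⟨hr0.le, hrs.trans hsd⟩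
    have d1 : dist (γ r) x' = r := by
      have := γd r hrI 0 ⟨le_rfl, dist_nonneg⟩
      rwa [γ0, sub_zero, abs_of_pos hr0] at this
    have d2 : dist (γ r) y = dist x' y - r := by
      have := γd r hrI (dist x' y) ⟨dist_nonneg, le_rfl⟩
      rwa [γ1, abs_sub_comm, abs_of_nonneg (by linarith)] at this
    obtain ⟨w, τ, hτ, hz⟩ := S.hηsurj (γ r)
    have hτr : τ ≤ r := by
      have := dcov_le_dist S w τ hτ x' hx'X
      rwa [hz, d1] at this
    refine ⟨x', γ r, w, τ, hx'X, hx'd, by rwa [d1], by rwa [d1], by rw [d1, d2]; ring, hτ,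
      hτr.trans hrs, hz, by rwa [d1], ?_⟩
    intro hw
    have hf := dcov_foot S w τ hτ
    rw [hz] at hf
    have hlt : dist (S.η0 w) x' < δ := by
      have := dist_triangle_left (S.η0 w) x' (γ r)
      linarith
    exact hδ' hlt ⟨w, hw, rfl⟩
  choose x' z w τ hx'X hx'd hr0 hrn hadd hτ hτs hz hτr hw using hdata
  obtain ⟨w0, -, φ, hφ, hlim⟩ := isCompact_univ.tendsto_subseq (fun n => Set.mem_univ (w n))
  have hinv : Tendsto (fun n : ℕ => 1 / ((φ n : ℝ) + 1)) atTop (𝓝 0) :=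
    tendsto_one_div_add_atTop_nhds_zero_nat.comp hφ.tendsto_atTop
  have hr : Tendsto (fun n => dist (z (φ n)) (x' (φ n))) atTop (𝓝 0) :=
    squeeze_zero (fun n => dist_nonneg) (fun n => hrn (φ n)) hinv
  have hx' : Tendsto (fun n => x' (φ n)) atTop (𝓝 x) :=
    tendsto_iff_dist_tendsto_zero.mpr
      (squeeze_zero (fun n => dist_nonneg) (fun n => (hx'd (φ n)).le) hinv)
  have hzlim : Tendsto (fun n => z (φ n)) atTop (𝓝 x) := by
    rw [tendsto_iff_dist_tendsto_zero] at hx' ⊢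
    refine squeeze_zero (fun n => dist_nonneg) (fun n => dist_triangle _ (x' (φ n)) _) ?_
    simpa using hr.add hx'
  have hτlim : Tendsto (fun n => τ (φ n)) atTop (𝓝 0) :=
    squeeze_zero (fun n => (hτ (φ n)).1) (fun n => hτr (φ n)) hr
  have hw0x : S.η0 w0 = x := by
    have h1 : Tendsto (fun n => S.η0 (w (φ n))) atTop (𝓝 (S.η0 w0)) :=
      ((dcov_eta0_cont S).tendsto w0).comp hlim
    have h2 : Tendsto (fun n => S.η0 (w (φ n))) atTop (𝓝 x) := by
      rw [tendsto_iff_dist_tendsto_zero] at hzlim ⊢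
      refine squeeze_zero (g := fun n => τ (φ n) + dist (z (φ n)) x) (fun n => dist_nonneg)
        (fun n => ?_) (by simpa using hτlim.add hzlim)
      have hf := dcov_foot S (w (φ n)) (τ (φ n)) (hτ (φ n))
      rw [hz] at hf
      have := dist_triangle_left (S.η0 (w (φ n))) x (z (φ n))
      linarith
    exact tendsto_nhds_unique h1 h2
  have hw0 : w0 = q := by
    rcases hfib' w0 hw0x with h | h
    · exfalso
      rw [h] at hlim
      obtain ⟨n, hn⟩ := (hlim.eventually (Metric.closedBall_mem_nhds p hρ)).exists
      exact hw _ hn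
    · exact h
  rw [hw0] at hlim
  -- the comparison points `S.η (w n) s`
  have hu : Tendsto (fun n => S.η (w (φ n)) s) atTop (𝓝 (S.η q s)) := by
    rw [tendsto_iff_dist_tendsto_zero] at hlim ⊢
    exact squeeze_zero (fun n => dist_nonneg) (fun n => S.hηslices _ _ s hsI) hlim
  have hqx : dist (S.η q s) x = s := by
    have := dcov_foot S q s hsI
    rwa [← heq] at this
  have l1 : Tendsto (fun n => dist (z (φ n)) y) atTop (𝓝 s) := by
    have := hzlim.dist (tendsto_const_nhds (x := y))
    rwa [dist_comm x y, hyx] at this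
  have l2 : Tendsto (fun n => dist (z (φ n)) (S.η (w (φ n)) s)) atTop (𝓝 s) := by
    have := hzlim.dist hu
    rwa [dist_comm x, hqx] at this
  have l3 : Tendsto (fun n => dist y (S.η (w (φ n)) s)) atTop (𝓝 (s + s)) := by
    have := (tendsto_const_nhds (x := y)).dist hu
    rwa [hpqs] at this
  have l4 : Tendsto (fun n => dist (S.η (w (φ n)) s) (x' (φ n))) atTop (𝓝 s) := by
    have := hu.dist hx'
    rwa [hqx] at this
  have A1 := dcov_model_tendsto c s hs0 hcs _ _ _ l1 l2 l3
  have A2 := dcov_model_le_half c s hs0 hcs _ _ _ l2 hr (fun n => hr0 (φ n)) (fun n => by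
    have h1 := dcov_le_dist S (w (φ n)) s hsI _ (hx'X (φ n))
    have h2 : dist (z (φ n)) (S.η (w (φ n)) s) = s - τ (φ n) := by
      rw [← hz (φ n), S.hperp _ _ (hτ (φ n)) _ hsI, abs_sub_comm,
        abs_of_nonneg (by linarith [hτs (φ n)])]
    linarith [(hτ (φ n)).1]) l4
  have hhalf : 0 < Real.arccos (1 / 2) := Real.arccos_pos.mpr (by norm_num)
  have e1 : ∀ᶠ n in atTop, Real.pi - Real.arccos (1 / 2) <
      comparisonAngle c (dist (z (φ n)) y) (dist (z (φ n)) (S.η (w (φ n)) s))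
        (dist y (S.η (w (φ n)) s)) := A1.eventually (lt_mem_nhds (by linarith))
  have e2 : ∀ᶠ n in atTop, √c * dist (z (φ n)) (x' (φ n)) < 3 :=
    (hr.const_mul (√c)).eventually (gt_mem_nhds (by simp))
  have e3 : ∀ᶠ n in atTop, √c * dist (z (φ n)) y < 3 :=
    (l1.const_mul (√c)).eventually (gt_mem_nhds (by linarith))
  have e4 : ∀ᶠ n in atTop, 0 < dist (z (φ n)) y := l1.eventually (lt_mem_nhds hs0)
  have e5 : ∀ᶠ n in atTop, 0 < dist (z (φ n)) (S.η (w (φ n)) s) :=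
    l2.eventually (lt_mem_nhds hs0)
  obtain ⟨n, g0, g1, g2, g3, g4, g5⟩ := (A2.and (e1.and (e2.and (e3.and (e4.and e5))))).exists
  have hfin := hcomp (z (φ n)) (x' (φ n)) y (S.η (w (φ n)) s)
    (dist_pos.mp (hr0 (φ n))) (dist_pos.mp g4) (dist_pos.mp g5)
  have B1 : comparisonAngle c (dist (z (φ n)) (x' (φ n))) (dist (z (φ n)) y)
      (dist (x' (φ n)) y) = Real.pi := by
    unfold comparisonAngle
    rw [hadd, dcov_model_degenerate c _ _ (hr0 (φ n)) g4 g2 g3, Real.arccos_neg_one]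
  have B3 : Real.arccos (1 / 2) ≤ comparisonAngle c (dist (z (φ n)) (S.η (w (φ n)) s))
      (dist (z (φ n)) (x' (φ n))) (dist (S.η (w (φ n)) s) (x' (φ n))) :=
    Real.arccos_le_arccos g0
  linarith

/-- In the limit setting of inradius collapse, the restriction
`η0|_{C0²} : C0² → X_2` is a double covering map and `X_2` is open in `X`. -/
theorem eta0_restriction_is_double_covering (S : InradiusCollapseLimit)
    (hfib : ∀ x : S.Y, ∃ a b : S.C0, {p : S.C0 | S.η0 p = x} ⊆ {a, b})
    (hmaps : Set.MapsTo S.η0 (S.η0 ⁻¹' S.X2set) S.X2set) :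
    IsCoveringMap (Set.MapsTo.restrict S.η0 _ _ hmaps) ∧
    (∀ x : S.X2set, Set.ncard (Set.MapsTo.restrict S.η0 _ _ hmaps ⁻¹' {x}) = 2) ∧
    (∃ U : Set S.Y, IsOpen U ∧ S.X2set = U ∩ S.X) := by
  have key : ∀ p ∈ S.η0 ⁻¹' S.X2set, ∃ q, p ≠ q ∧ S.η0 p = S.η0 q := by
    rintro p ⟨-, a, b, hab, ha, hb⟩
    by_cases h : p = a
    · exact ⟨b, h ▸ hab, hb.symm⟩
    · exact ⟨a, h, ha.symm⟩
  have two : ∀ a b d : S.C0, S.η0 a = S.η0 b → S.η0 a = S.η0 d → a ≠ d → b ≠ d → a = b := by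
    intro a b d h1 h2 h3 h4
    obtain ⟨u, v, huv⟩ := hfib (S.η0 a)
    have m1 : a ∈ ({u, v} : Set S.C0) := huv rfl
    have m2 : b ∈ ({u, v} : Set S.C0) := huv h1.symm
    have m3 : d ∈ ({u, v} : Set S.C0) := huv h2.symm
    simp only [Set.mem_insert_iff, Set.mem_singleton_iff] at m1 m2 m3
    grind
  set f := Set.MapsTo.restrict S.η0 _ _ hmaps with hf
  have fval : ∀ e, ((f e : S.X2set) : S.Y) = S.η0 e := fun e => rfl
  have hcard : ∀ x : S.X2set, Set.ncard (f ⁻¹' {x}) = 2 := by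
    rintro ⟨x, hx⟩
    obtain ⟨hxX, a, b, hab, ha, hb⟩ := hx
    rw [Set.ncard_eq_two]
    refine ⟨⟨a, ?_⟩, ⟨b, ?_⟩, ?_, ?_⟩
    · exact ⟨ha ▸ hxX, a, b, hab, rfl, hb.trans ha.symm⟩
    · exact ⟨hb ▸ hxX, a, b, hab, ha.trans hb.symm, rfl⟩
    · exact fun h => hab (congrArg Subtype.val h)
    · ext ⟨e, he⟩
      simp only [Set.mem_preimage, Set.mem_singleton_iff, Set.mem_insert_iff, Subtype.ext_iff, fval]
      constructor
      · intro h
        by_contra hne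
        push Not at hne
        exact hne.1 (two e a b (h.trans ha.symm) (h.trans hb.symm) hne.2 hab)
      · rintro (h | h)
        · rw [h, ha]
        · rw [h, hb]
  have fcont : Continuous f := (dcov_eta0_cont S).restrict hmaps
  have fclosed : IsClosedMap f := (dcov_eta0_cont S).isClosedMap.restrictPreimage S.X2set
  have fopen : IsOpenMap f := by
    rw [isOpenMap_iff_nhds_le]
    rintro ⟨p, hp⟩ W hW
    obtain ⟨q, hpq, heq⟩ := key p hp
    rw [Filter.mem_map, mem_nhds_subtype] at hW
    obtain ⟨V, hV, hVW⟩ := hW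
    have hn := dcov_open_at S hfib p q hpq heq V hV
    rw [mem_nhdsWithin_iff_exists_mem_nhds_inter] at hn
    obtain ⟨U, hU, hUV⟩ := hn
    rw [mem_nhds_subtype]
    refine ⟨U, hU, ?_⟩
    rintro ⟨y, hy⟩ hyU
    obtain ⟨v, hv, hvy⟩ := hUV ⟨hyU, hy.1⟩
    have hv2 : v ∈ S.η0 ⁻¹' S.X2set := by rw [Set.mem_preimage, hvy]; exact hy
    have hmem : (⟨v, hv2⟩ : S.η0 ⁻¹' S.X2set) ∈ f ⁻¹' W := hVW hv
    have hfy : f ⟨v, hv2⟩ = ⟨y, hy⟩ := Subtype.ext hvy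
    rw [Set.mem_preimage, hfy] at hmem
    exact hmem
  have floc : IsLocalHomeomorph f := by
    rw [isLocalHomeomorph_iff_isOpenEmbedding_restrict]
    rintro ⟨p, hp⟩
    obtain ⟨q, hpq, heq⟩ := key p hp
    obtain ⟨V, V', hV, hV', hpV, hqV', hdis⟩ := t2_separation hpq
    have hn := dcov_open_at S hfib q p hpq.symm heq.symm V' (hV'.mem_nhds hqV')
    rw [mem_nhdsWithin] at hn
    obtain ⟨U, hU, hqU, hUV⟩ := hn
    let O : Set (S.η0 ⁻¹' S.X2set) := Subtype.val ⁻¹' (V ∩ S.η0 ⁻¹' U)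
    have hO : IsOpen O :=
      (hV.inter (hU.preimage (dcov_eta0_cont S))).preimage continuous_subtype_val
    refine ⟨O, hO.mem_nhds ⟨hpV, ?_⟩, ?_⟩
    · change S.η0 p ∈ U
      rw [heq]
      exact hqU
    · refine IsOpenEmbedding.of_continuous_injective_isOpenMap
        (fcont.comp continuous_subtype_val) ?_ (fopen.comp hO.isOpenMap_subtype_val)
      rintro ⟨⟨a, ha⟩, haV, haU⟩ ⟨⟨b, hb⟩, hbV, hbU⟩ hab
      have hab' : S.η0 a = S.η0 b := congrArg Subtype.val hab
      obtain ⟨d, hd, hda⟩ := hUV ⟨haU, S.hη0X a⟩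
      have := two a b d hab' hda.symm
        (fun h => Set.disjoint_left.mp hdis haV (h ▸ hd))
        (fun h => Set.disjoint_left.mp hdis hbV (h ▸ hd))
      exact Subtype.ext (Subtype.ext this)
  refine ⟨?_, hcard, ?_⟩
  · rw [isCoveringMap_iff_isCoveringMapOn_univ]
    refine fclosed.isCoveringMapOn_of_isLocalHomeomorphOn (fun x _ => ?_) ?_
    · exact Set.finite_of_ncard_pos (by rw [hcard]; norm_num)
    · exact floc.isLocalHomeomorphOn.mono (Set.subset_univ _)
  · have hnear : ∀ x ∈ S.X2set, ∃ U : Set S.Y, IsOpen U ∧ x ∈ U ∧ U ∩ S.X ⊆ S.X2set := by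
      rintro x ⟨hxX, p, q, hpq, hp, hq⟩
      obtain ⟨V, V', hV, hV', hpV, hqV', hdis⟩ := t2_separation hpq
      have n1 := dcov_open_at S hfib p q hpq (hp.trans hq.symm) V (hV.mem_nhds hpV)
      have n2 := dcov_open_at S hfib q p hpq.symm (hq.trans hp.symm) V' (hV'.mem_nhds hqV')
      rw [hp] at n1
      rw [hq] at n2
      obtain ⟨U, hU, hxU, hsub⟩ := mem_nhdsWithin.mp (Filter.inter_mem n1 n2)
      refine ⟨U, hU, hxU, fun y hy => ?_⟩
      obtain ⟨⟨a, ha, hay⟩, ⟨b, hb, hby⟩⟩ := hsub hy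
      exact ⟨hy.2, a, b, fun h => Set.disjoint_left.mp hdis ha (h ▸ hb), hay, hby⟩
    choose! U hU hxU hsub using hnear
    refine ⟨⋃ x ∈ S.X2set, U x, isOpen_biUnion hU, ?_⟩
    ext y
    constructor
    · intro hy
      exact ⟨Set.mem_biUnion hy (hxU y hy), hy.1⟩
    · rintro ⟨hy, hyX⟩
      obtain ⟨x, hx, hyx⟩ := Set.mem_iUnion₂.mp hy
      exact hsub x hx ⟨hyx, hyX⟩
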